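/- For every Schwartz function a ∈ S(ℝ^{2n}, ℂ), the Weyl kernel K_a(x, y) := (2π)^{−n} ∫_{ℝⁿ} a((x+y)/2, ξ) e^{i(x−y|ξ)} dξ is a Schwartz function on ℝ^{2n} = ℝⁿ × ℝⁿ, the integral operator (Op(a)u)(x) := ∫_{ℝⁿ} K_a(x, y) u(y) dy is a bounded linear operator on L²(ℝⁿ), and Op(a) is Hilbert–Schmidt with ∫_{ℝ^{2n}} |K_a(x,y)|² dx dy = (2π)^{−n} ∫_{ℝ^{2n}} |a(x,ξ)|² dx dξ. -/

import Mathlib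

/-!
Put `V = ℝⁿ` and let `𝓕₂` be the Fourier transform in the second variable. Then
`K_a = (2π)⁻ⁿ • (𝓕₂ a) ∘ Φ`, where `Φ(x, y) = ((x + y) / 2, (y - x) / 2π)` is a linear
automorphism of `V × V` with `|det Φ| = (2π)⁻ⁿ`. So `K_a` is Schwartz as soon as `𝓕₂` preserves the
Schwartz space, and Plancherel on the slices `a(x, ·)` together with the change of variables `Φ`
gives `‖K_a‖² = (2π)⁻ⁿ ‖a‖²` in `L²`.

For `𝓕₂ f`, decay follows from the continuity of `𝓕` on `𝓢(V)` applied slice by slice, since the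
seminorms of `f(x, ·)` decay rapidly in `x`. Differentiating under the integral sign shows that the
derivative of `𝓕₂ f` is `𝓕₂` of another Schwartz function, with values in a larger space, so
smoothness and the decay of all derivatives come by induction on the order, over all target spaces.

A square-integrable kernel defines a bounded operator by Cauchy–Schwarz on slices and Tonelli.
-/

open MeasureTheory

noncomputable section

/-- Euclidean scalar product on `ℝⁿ`. -/
def dotn {n : ℕ} (p q : Fin n → ℝ) : ℝ := ∑ i, p i * q i

open Module Real
open scoped ENNReal FourierTransform RealInnerProductSpace SchwartzMap

section Slice

lemma norm_pow_mul_norm_pow_le_norm_prodMk_pow {X V : Type*} [SeminormedAddCommGroup X]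
    [SeminormedAddCommGroup V] (x : X) (v : V) (j k : ℕ) :
    ‖x‖ ^ j * ‖v‖ ^ k ≤ ‖(x, v)‖ ^ (j + k) := by
  rw [pow_add]
  gcongr
  exacts [norm_fst_le (x, v), norm_snd_le (x, v)]

variable {𝕜 X V F : Type*} [NormedAddCommGroup X] [NormedSpace ℝ X]
  [NormedAddCommGroup V] [NormedSpace ℝ V] [NormedAddCommGroup F] [NormedSpace ℝ F]

lemma norm_iteratedFDeriv_prodMk_right_le {g : X × V → F} {m : ℕ} (hg : ContDiff ℝ m g)
    (x : X) (v : V) :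
    ‖iteratedFDeriv ℝ m (fun w ↦ g (x, w)) v‖ ≤ ‖iteratedFDeriv ℝ m g (x, v)‖ := by
  have hslice : (fun w ↦ g (x, w)) = (fun z ↦ g ((x, 0) + z)) ∘ ContinuousLinearMap.inr ℝ X V := by
    ext w; simp
  have htrans : ContDiff ℝ m (fun z ↦ g ((x, 0) + z)) := by fun_prop
  have hinr : ‖ContinuousLinearMap.inr ℝ X V‖ ≤ 1 :=
    ContinuousLinearMap.opNorm_le_bound _ zero_le_one fun w ↦ by simp
  rw [hslice, ContinuousLinearMap.iteratedFDeriv_comp_right _ htrans _ le_rfl,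
    iteratedFDeriv_comp_add_left]
  refine (ContinuousMultilinearMap.norm_compContinuousLinearMap_le _ _).trans ?_
  simpa using mul_le_of_le_one_right (norm_nonneg _) (pow_le_one₀ (norm_nonneg _) hinr)

/-- The slice `f(x, ·)` of a Schwartz function `f` on `X × V`, as a Schwartz function on `V`. -/
def schwartzSlice (f : 𝓢(X × V, F)) (x : X) : 𝓢(V, F) where
  toFun v := f (x, v)
  smooth' := (f.smooth ⊤).comp (contDiff_const.prodMk contDiff_id)
  decay' k m := by
    obtain ⟨C, hC⟩ := f.decay' k m
    refine ⟨C, fun v ↦ le_trans ?_ (hC (x, v))⟩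
    gcongr
    · exact norm_snd_le (x, v)
    · exact norm_iteratedFDeriv_prodMk_right_le (f.smooth m) x v

@[simp]
lemma schwartzSlice_apply (f : 𝓢(X × V, F)) (x : X) (v : V) : schwartzSlice f x v = f (x, v) := rfl

lemma norm_pow_mul_seminorm_schwartzSlice_le [NormedField 𝕜] [NormedSpace 𝕜 F]
    [SMulCommClass ℝ 𝕜 F] (f : 𝓢(X × V, F)) (x : X) (j k m : ℕ) :
    ‖x‖ ^ j * SchwartzMap.seminorm 𝕜 k m (schwartzSlice f x) ≤
      SchwartzMap.seminorm 𝕜 (j + k) m f := by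
  rcases eq_or_ne (‖x‖ ^ j) 0 with hx | hx
  · simp [hx]
  have hpos : 0 < ‖x‖ ^ j := by positivity
  rw [← le_div_iff₀' hpos]
  refine SchwartzMap.seminorm_le_bound 𝕜 k m _ (by positivity) fun v ↦ ?_
  rw [le_div_iff₀' hpos]
  calc ‖x‖ ^ j * (‖v‖ ^ k * ‖iteratedFDeriv ℝ m (schwartzSlice f x) v‖)
      ≤ ‖(x, v)‖ ^ (j + k) * ‖iteratedFDeriv ℝ m f (x, v)‖ := by
        rw [← mul_assoc]
        gcongr
        · exact norm_pow_mul_norm_pow_le_norm_prodMk_pow x v j k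
        · exact norm_iteratedFDeriv_prodMk_right_le (f.smooth m) x v
    _ ≤ _ := SchwartzMap.le_seminorm 𝕜 (j + k) m f (x, v)

lemma exists_integrable_bound_schwartzSlice [MeasurableSpace V] (μ : Measure V)
    [μ.HasTemperateGrowth] (f : 𝓢(X × V, F)) :
    ∃ b : V → ℝ, Integrable b μ ∧ ∀ x v, ‖f (x, v)‖ ≤ b v := by
  obtain ⟨C, hC⟩ := f.decay 0 0
  obtain ⟨D, hD⟩ := f.decay μ.integrablePower 0
  refine ⟨_, (Measure.integrable_pow_neg_integrablePower μ).const_mul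
    (2 ^ μ.integrablePower * (C + D)), fun x v ↦ ?_⟩
  have hv : ‖v‖ ^ μ.integrablePower * ‖f (x, v)‖ ≤ D := by
    refine le_trans ?_ (hD.2 (x, v))
    rw [norm_iteratedFDeriv_zero]
    gcongr
    exact norm_snd_le (x, v)
  simpa using pow_mul_le_of_le_of_pow_mul_le (k := 0) (norm_nonneg v) (norm_nonneg _)
    (by simpa using hC.2 (x, v)) (by simpa using hv)

end Slice

lemma seminorm_finset_sup_apply_le_sum {𝕜 E ι : Type*} [SeminormedRing 𝕜] [AddCommGroup E]
    [Module 𝕜 E] (s : Finset ι) (p : ι → Seminorm 𝕜 E) (x : E) : s.sup p x ≤ ∑ i ∈ s, p i x :=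
  Seminorm.finset_sup_apply_le (Finset.sum_nonneg fun i _ ↦ apply_nonneg (p i) x) fun _ hi ↦
    Finset.single_le_sum (f := fun i ↦ p i x) (fun i _ ↦ apply_nonneg (p i) x) hi

section PartialFourier

variable {X V F : Type*} [NormedAddCommGroup X] [NormedSpace ℝ X]
  [NormedAddCommGroup V] [InnerProductSpace ℝ V] [NormedAddCommGroup F] [NormedSpace ℂ F]

-- Without this shortcut, instance search times out on operator norms over `X × V →L[ℝ] F`.
local instance : NormedSpace ℝ V := InnerProductSpace.toNormedSpace

/-- The symbol whose partial Fourier transform is the derivative of that of `f`: at `(x, v)` it is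
the linear map `(x', w') ↦ ∂ₓf(x, v) x' - 2πi ⟪v, w'⟫ f(x, v)`. -/
def partialFourierDerivSymbol (f : 𝓢(X × V, F)) : 𝓢(X × V, X × V →L[ℝ] F) :=
  SchwartzMap.postcompCLM ((ContinuousLinearMap.compL ℝ (X × V) (X × V) F).flip
    ((ContinuousLinearMap.inl ℝ X V).comp (ContinuousLinearMap.fst ℝ X V)))
    (SchwartzMap.fderivCLM ℝ _ F f) -
  (2 * π * Complex.I) • SchwartzMap.smulRightCLM ℂ F
    ((innerSL ℝ).bilinearComp (ContinuousLinearMap.snd ℝ X V) (ContinuousLinearMap.snd ℝ X V)) f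

lemma partialFourierDerivSymbol_apply_apply (f : 𝓢(X × V, F)) (z h : X × V) :
    partialFourierDerivSymbol f z h =
      fderiv ℝ f z (h.1, 0) - (2 * π * Complex.I) • ⟪z.2, h.2⟫ • f z := rfl

lemma hasFDerivAt_fourierChar_smul_symbol (f : 𝓢(X × V, F)) (z : X × V) (v : V) :
    HasFDerivAt (fun z : X × V ↦ (𝐞 (-⟪v, z.2⟫) : ℂ) • f (z.1, v))
      ((𝐞 (-⟪v, z.2⟫) : ℂ) • partialFourierDerivSymbol f (z.1, v)) z := by
  have hchar := Real.hasFDerivAt_fourierChar_neg_bilinear_right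
    ((innerSL ℝ).bilinearComp (.id ℝ V) (.snd ℝ X V)) v z
  have hslice := (f.hasFDerivAt (z.1, v)).comp z
    ((hasFDerivAt_fst (𝕜 := ℝ) (p := z)).prodMk (hasFDerivAt_const v z))
  refine (hchar.fun_smul hslice).congr_fderiv (ContinuousLinearMap.ext fun h ↦ ?_)
  have hsymbol : ((𝐞 (-⟪v, z.2⟫) : ℂ) • partialFourierDerivSymbol f (z.1, v)) h =
      (𝐞 (-⟪v, z.2⟫) : ℂ) • partialFourierDerivSymbol f (z.1, v) h := rfl
  rw [hsymbol, partialFourierDerivSymbol_apply_apply]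
  simp only [add_apply, smul_apply, smul_sub, ContinuousLinearMap.smulRight_apply,
    ContinuousLinearMap.comp_apply, ContinuousLinearMap.prod_apply, ContinuousLinearMap.coe_fst',
    zero_apply, Complex.ofRealCLM_apply, ContinuousLinearMap.bilinearComp_apply,
    ContinuousLinearMap.coe_snd', ContinuousLinearMap.id_apply, innerSL_apply_apply,
    Function.comp_apply, ← Complex.coe_smul]
  module

variable [FiniteDimensional ℝ V] [MeasurableSpace V] [BorelSpace V]

/-- The Fourier transform in the second variable only, as a bare function on `X × V`; it is upgraded
to a Schwartz function in `partialFourier`. -/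
def partialFourierIntegral (f : 𝓢(X × V, F)) (z : X × V) : F := 𝓕 (schwartzSlice f z.1) z.2

lemma partialFourierIntegral_eq_integral (f : 𝓢(X × V, F)) (z : X × V) :
    partialFourierIntegral f z = ∫ v, (𝐞 (-⟪v, z.2⟫) : ℂ) • f (z.1, v) := by
  simp [partialFourierIntegral, SchwartzMap.fourier_coe, Real.fourier_eq, Circle.smul_def]

lemma integrable_fourierChar_smul_schwartzSlice (f : 𝓢(X × V, F)) (z : X × V) :
    Integrable fun v ↦ (𝐞 (-⟪v, z.2⟫) : ℂ) • f (z.1, v) :=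
  (Real.fourierIntegral_convergent_iff z.2).2 (schwartzSlice f z.1).integrable

lemma exists_seminorm_fourier_le (k m : ℕ) : ∃ (s : Finset (ℕ × ℕ)) (C : NNReal), ∀ g : 𝓢(V, F),
    SchwartzMap.seminorm ℂ k m (𝓕 g) ≤ C * ∑ i ∈ s, SchwartzMap.seminorm ℂ i.1 i.2 g := by
  let p : Seminorm ℂ 𝓢(V, F) :=
    (SchwartzMap.seminorm ℂ k m).comp (FourierTransform.fourierCLM ℂ 𝓢(V, F)).toLinearMap
  have hp : Continuous p :=
    ((schwartz_withSeminorms ℂ V F).continuous_seminorm (k, m)).comp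
      (FourierTransform.fourierCLM ℂ 𝓢(V, F)).continuous
  obtain ⟨s, C, -, hC⟩ := Seminorm.bound_of_continuous (schwartz_withSeminorms ℂ V F) p hp
  refine ⟨s, C, fun g ↦ (hC g).trans ?_⟩
  exact mul_le_mul_of_nonneg_left (seminorm_finset_sup_apply_le_sum s _ g) C.coe_nonneg

lemma exists_norm_pow_mul_norm_pow_mul_norm_partialFourierIntegral_le (f : 𝓢(X × V, F))
    (j k : ℕ) : ∃ C, ∀ x w, ‖x‖ ^ j * (‖w‖ ^ k * ‖partialFourierIntegral f (x, w)‖) ≤ C := by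
  obtain ⟨s, C, hC⟩ := exists_seminorm_fourier_le (V := V) (F := F) k 0
  refine ⟨C * ∑ i ∈ s, SchwartzMap.seminorm ℂ (j + i.1) i.2 f, fun x w ↦ ?_⟩
  calc ‖x‖ ^ j * (‖w‖ ^ k * ‖partialFourierIntegral f (x, w)‖)
      ≤ ‖x‖ ^ j * SchwartzMap.seminorm ℂ k 0 (𝓕 (schwartzSlice f x)) := by
        gcongr
        exact SchwartzMap.norm_pow_mul_le_seminorm ℂ (𝓕 (schwartzSlice f x)) k w
    _ ≤ ‖x‖ ^ j * (C * ∑ i ∈ s, SchwartzMap.seminorm ℂ i.1 i.2 (schwartzSlice f x)) := by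
        gcongr
        exact hC (schwartzSlice f x)
    _ = C * ∑ i ∈ s, ‖x‖ ^ j * SchwartzMap.seminorm ℂ i.1 i.2 (schwartzSlice f x) := by
        rw [mul_left_comm, Finset.mul_sum]
    _ ≤ _ := by
        gcongr
        exact norm_pow_mul_seminorm_schwartzSlice_le f x j _ _

lemma exists_norm_pow_mul_norm_partialFourierIntegral_le (f : 𝓢(X × V, F)) (k : ℕ) :
    ∃ C, ∀ z, ‖z‖ ^ k * ‖partialFourierIntegral f z‖ ≤ C := by
  obtain ⟨C, hC⟩ := exists_norm_pow_mul_norm_pow_mul_norm_partialFourierIntegral_le f k 0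
  obtain ⟨D, hD⟩ := exists_norm_pow_mul_norm_pow_mul_norm_partialFourierIntegral_le f 0 k
  refine ⟨max C D, fun ⟨x, w⟩ ↦ ?_⟩
  rcases max_choice ‖x‖ ‖w‖ with h | h <;> rw [Prod.norm_mk, h]
  · exact le_max_of_le_left (by simpa using hC x w)
  · exact le_max_of_le_right (by simpa using hD x w)

lemma hasFDerivAt_partialFourierIntegral (f : 𝓢(X × V, F)) (z : X × V) :
    HasFDerivAt (𝕜 := ℝ) (partialFourierIntegral f)
      (partialFourierIntegral (partialFourierDerivSymbol f) z) z := by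
  obtain ⟨b, hb, hfb⟩ := exists_integrable_bound_schwartzSlice volume (partialFourierDerivSymbol f)
  have hbound (v : V) (z : X × V) :
      ‖(𝐞 (-⟪v, z.2⟫) : ℂ) • partialFourierDerivSymbol f (z.1, v)‖ ≤ b v := by
    rw [norm_smul, Circle.norm_coe, one_mul]
    exact hfb z.1 v
  simp only [funext (partialFourierIntegral_eq_integral _)]
  exact hasFDerivAt_integral_of_dominated_of_fderiv_le Filter.univ_mem
    (.of_forall fun z ↦ (integrable_fourierChar_smul_schwartzSlice f z).aestronglyMeasurable)
    (integrable_fourierChar_smul_schwartzSlice f z)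
    (integrable_fourierChar_smul_schwartzSlice (partialFourierDerivSymbol f) z).aestronglyMeasurable
    (.of_forall fun v z _ ↦ hbound v z) hb
    (.of_forall fun v z _ ↦ hasFDerivAt_fourierChar_smul_symbol f z v)

lemma fderiv_partialFourierIntegral (f : 𝓢(X × V, F)) :
    fderiv ℝ (partialFourierIntegral f) = partialFourierIntegral (partialFourierDerivSymbol f) :=
  funext fun z ↦ (hasFDerivAt_partialFourierIntegral f z).fderiv

end PartialFourier

section PartialFourierSchwartz

-- A single universe, so that the inductions below can replace `F` by `X × V →L[ℝ] F`.
universe u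

variable {X V F : Type u} [NormedAddCommGroup X] [NormedSpace ℝ X]
  [NormedAddCommGroup V] [InnerProductSpace ℝ V] [FiniteDimensional ℝ V]
  [MeasurableSpace V] [BorelSpace V] [NormedAddCommGroup F] [NormedSpace ℂ F]

lemma contDiff_partialFourierIntegral (m : ℕ) (f : 𝓢(X × V, F)) :
    ContDiff ℝ m (partialFourierIntegral f) := by
  induction m generalizing F with
  | zero =>
    exact contDiff_zero.2 (continuous_iff_continuousAt.2 fun z ↦
      (hasFDerivAt_partialFourierIntegral f z).continuousAt)
  | succ m ih =>
    push_cast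
    refine contDiff_succ_iff_fderiv.2
      ⟨fun z ↦ (hasFDerivAt_partialFourierIntegral f z).differentiableAt, by simp, ?_⟩
    rw [fderiv_partialFourierIntegral]
    exact ih _

lemma exists_norm_pow_mul_norm_iteratedFDeriv_partialFourierIntegral_le (k m : ℕ)
    (f : 𝓢(X × V, F)) :
    ∃ C, ∀ z, ‖z‖ ^ k * ‖iteratedFDeriv ℝ m (partialFourierIntegral f) z‖ ≤ C := by
  induction m generalizing F with
  | zero => simpa using exists_norm_pow_mul_norm_partialFourierIntegral_le f k
  | succ m ih =>
    simp only [← norm_iteratedFDeriv_fderiv, fderiv_partialFourierIntegral]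
    exact ih _

/-- The Fourier transform in the second variable only, as a Schwartz function. -/
def partialFourier (f : 𝓢(X × V, F)) : 𝓢(X × V, F) where
  toFun := partialFourierIntegral f
  smooth' := contDiff_infty.2 fun m ↦ contDiff_partialFourierIntegral m f
  decay' k m := exists_norm_pow_mul_norm_iteratedFDeriv_partialFourierIntegral_le k m f

lemma partialFourier_apply (f : 𝓢(X × V, F)) (x : X) (w : V) :
    partialFourier f (x, w) = 𝓕 (schwartzSlice f x) w := rfl

end PartialFourierSchwartz

section Plancherel

universe u

variable {X V H : Type u} [NormedAddCommGroup X] [NormedSpace ℝ X] [FiniteDimensional ℝ X]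
  [MeasurableSpace X] [BorelSpace X] [NormedAddCommGroup V] [InnerProductSpace ℝ V]
  [FiniteDimensional ℝ V] [MeasurableSpace V] [BorelSpace V] [NormedAddCommGroup H]
  [InnerProductSpace ℂ H] [CompleteSpace H]

lemma integral_norm_sq_partialFourier (μ : Measure X) [μ.IsAddHaarMeasure] (f : 𝓢(X × V, H)) :
    ∫ z, ‖partialFourier f z‖ ^ 2 ∂(μ.prod volume) = ∫ z, ‖f z‖ ^ 2 ∂(μ.prod volume) := by
  have : (μ.prod (volume : Measure V)).IsAddHaarMeasure := Measure.prod.instIsAddHaarMeasure _ _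
  have hint (g : 𝓢(X × V, H)) : Integrable (fun z ↦ ‖g z‖ ^ 2) (μ.prod volume) :=
    (g.memLp 2 _).norm.integrable_sq
  rw [integral_prod _ (hint f), integral_prod _ (hint (partialFourier f))]
  exact integral_congr_ae (.of_forall fun x ↦
    SchwartzMap.integral_norm_sq_fourier (schwartzSlice f x))

end Plancherel

section WeylCoordinates

variable (V : Type*) [NormedAddCommGroup V] [NormedSpace ℝ V]

/-- The linear change of variables `(x, y) ↦ ((x + y) / 2, (y - x) / 2π)`. The second coordinate is
chosen so that the character `e^{-2πi⟪w, ξ⟫}` of the Fourier transform becomes the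
`e^{i⟪x - y, ξ⟫}` of the Weyl calculus. -/
def weylCoordinates : (V × V) ≃L[ℝ] V × V :=
  ContinuousLinearEquiv.equivOfInverse
    (((2⁻¹ : ℝ) • (ContinuousLinearMap.fst ℝ V V + ContinuousLinearMap.snd ℝ V V)).prod
      ((2 * π)⁻¹ • (ContinuousLinearMap.snd ℝ V V - ContinuousLinearMap.fst ℝ V V)))
    ((ContinuousLinearMap.fst ℝ V V - π • ContinuousLinearMap.snd ℝ V V).prod
      (ContinuousLinearMap.fst ℝ V V + π • ContinuousLinearMap.snd ℝ V V))
    (fun z ↦ by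
      ext1 <;> simp only [ContinuousLinearMap.prod_apply, add_apply, sub_apply, smul_apply,
        ContinuousLinearMap.coe_fst', ContinuousLinearMap.coe_snd'] <;>
      match_scalars <;> field_simp <;> ring)
    (fun z ↦ by
      ext1 <;> simp only [ContinuousLinearMap.prod_apply, add_apply, sub_apply, smul_apply,
        ContinuousLinearMap.coe_fst', ContinuousLinearMap.coe_snd'] <;>
      match_scalars <;> field_simp <;> ring)

variable {V}

lemma weylCoordinates_apply (z : V × V) :
    weylCoordinates V z = ((2⁻¹ : ℝ) • (z.1 + z.2), (2 * π)⁻¹ • (z.2 - z.1)) := rfl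

variable [FiniteDimensional ℝ V] [MeasurableSpace V] [BorelSpace V]
  (μ : Measure V) [μ.IsAddHaarMeasure]

lemma measurePreserving_midpoint_sub :
    MeasurePreserving (fun z : V × V ↦ ((2⁻¹ : ℝ) • (z.1 + z.2), z.2 - z.1))
      (μ.prod μ) (μ.prod μ) := by
  have hadd : MeasurePreserving (fun z : V × V ↦ (z.1, (2⁻¹ : ℝ) • z.1 + z.2))
      (μ.prod μ) (μ.prod μ) :=
    (MeasurePreserving.id μ).skew_product (g := fun w x ↦ (2⁻¹ : ℝ) • w + x) (by fun_prop)
      (.of_forall fun w ↦ map_add_left_eq_self μ _)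
  have hcomp : (fun z : V × V ↦ ((2⁻¹ : ℝ) • (z.1 + z.2), z.2 - z.1)) =
      Prod.swap ∘ (fun z : V × V ↦ (z.1, (2⁻¹ : ℝ) • z.1 + z.2)) ∘ Prod.swap ∘
        fun z : V × V ↦ (z.1, z.2 - z.1) := by
    funext z
    refine Prod.ext ?_ rfl
    simp only [Function.comp_apply, Prod.swap_prod_mk]
    module
  rw [hcomp]
  exact Measure.measurePreserving_swap.comp <| hadd.comp <|
    Measure.measurePreserving_swap.comp <| measurePreserving_prod_sub μ μ

lemma map_prodMap_id_smul {α : Type*} [MeasurableSpace α] (ν : Measure α) [SFinite ν] {r : ℝ}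
    (hr : r ≠ 0) :
    (ν.prod μ).map (Prod.map id (r • ·)) =
      ENNReal.ofReal |(r ^ finrank ℝ V)⁻¹| • ν.prod μ := by
  rw [← Measure.map_prod_map ν μ measurable_id (measurable_const_smul r), Measure.map_id,
    Measure.map_addHaar_smul μ hr, Measure.prod_smul_right]

lemma map_weylCoordinates :
    (μ.prod μ).map (weylCoordinates V) = ENNReal.ofReal ((2 * π) ^ finrank ℝ V) • μ.prod μ := by
  have hcomp : ⇑(weylCoordinates V) = Prod.map id ((2 * π)⁻¹ • ·) ∘
      fun z : V × V ↦ ((2⁻¹ : ℝ) • (z.1 + z.2), z.2 - z.1) := rfl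
  rw [hcomp, ← Measure.map_map (by fun_prop) (by fun_prop),
    (measurePreserving_midpoint_sub μ).map_eq, map_prodMap_id_smul μ μ (by positivity), inv_pow,
    inv_inv, abs_of_pos (by positivity)]

lemma integral_comp_weylCoordinates {E : Type*} [NormedAddCommGroup E] [NormedSpace ℝ E]
    (g : V × V → E) :
    ∫ z, g (weylCoordinates V z) ∂(μ.prod μ) =
      (2 * π) ^ finrank ℝ V • ∫ z, g z ∂(μ.prod μ) := by
  have hemb : MeasurableEmbedding (weylCoordinates V) :=
    (weylCoordinates V).toHomeomorph.measurableEmbedding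
  rw [← hemb.integral_map, map_weylCoordinates, integral_smul_measure,
    ENNReal.toReal_ofReal (by positivity)]

end WeylCoordinates

section WeylKernel

universe u

variable {V F H : Type u} [NormedAddCommGroup V] [InnerProductSpace ℝ V] [FiniteDimensional ℝ V]
  [MeasurableSpace V] [BorelSpace V] [NormedAddCommGroup F] [NormedSpace ℂ F]
  [NormedAddCommGroup H] [InnerProductSpace ℂ H] [CompleteSpace H]

/-- The kernel `K_a(x, y)` of the Weyl quantization of the symbol `a`, as a Schwartz function; see
`weylKernel_apply` for the integral formula. -/
def weylKernel (a : 𝓢(V × V, F)) : 𝓢(V × V, F) :=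
  ((2 * π) ^ finrank ℝ V)⁻¹ •
    SchwartzMap.compCLMOfContinuousLinearEquiv ℝ (weylCoordinates V) (partialFourier a)

lemma weylKernel_eq_smul_partialFourier (a : 𝓢(V × V, F)) (z : V × V) :
    weylKernel a z =
      ((2 * π) ^ finrank ℝ V)⁻¹ • partialFourier a (weylCoordinates V z) := rfl

lemma weylKernel_apply (a : 𝓢(V × V, F)) (x y : V) :
    weylKernel a (x, y) = ((2 * π) ^ finrank ℝ V)⁻¹ •
      ∫ ξ, Complex.exp (Complex.I * ⟪x - y, ξ⟫) • a ((2⁻¹ : ℝ) • (x + y), ξ) := by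
  have hphase (ξ : V) : -2 * π * ⟪ξ, (2 * π)⁻¹ • (y - x)⟫ = ⟪x - y, ξ⟫ := by
    rw [real_inner_smul_right, real_inner_comm, ← neg_sub x y, inner_neg_left]
    field_simp
  rw [weylKernel_eq_smul_partialFourier, weylCoordinates_apply, partialFourier_apply,
    SchwartzMap.fourier_coe, Real.fourier_eq']
  simp only [hphase, schwartzSlice_apply, mul_comm Complex.I]

lemma integral_norm_sq_weylKernel (a : 𝓢(V × V, H)) :
    ∫ z, ‖weylKernel a z‖ ^ 2 = ((2 * π) ^ finrank ℝ V)⁻¹ * ∫ z, ‖a z‖ ^ 2 := by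
  have hpos : 0 < (2 * π) ^ finrank ℝ V := by positivity
  have hnorm (z : V × V) : ‖weylKernel a z‖ ^ 2 =
      ((2 * π) ^ finrank ℝ V)⁻¹ ^ 2 * ‖partialFourier a (weylCoordinates V z)‖ ^ 2 := by
    rw [weylKernel_eq_smul_partialFourier, norm_smul, mul_pow, Real.norm_of_nonneg (by positivity)]
  simp only [hnorm, integral_const_mul, Measure.volume_eq_prod]
  rw [integral_comp_weylCoordinates volume fun z ↦ ‖partialFourier a z‖ ^ 2,
    integral_norm_sq_partialFourier, smul_eq_mul]
  generalize (2 * π) ^ finrank ℝ V = c at hpos ⊢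
  field_simp

end WeylKernel

section HilbertSchmidt

variable {α β 𝕜 : Type*} [MeasurableSpace α] [MeasurableSpace β] {μ : Measure α} {ν : Measure β}
  [RCLike 𝕜] {K : α × β → 𝕜}

lemma enorm_integral_mul_le_eLpNorm_mul_eLpNorm {f g : β → 𝕜} (hf : AEStronglyMeasurable f ν)
    (hg : AEStronglyMeasurable g ν) :
    ‖∫ y, f y * g y ∂ν‖ₑ ≤ eLpNorm f 2 ν * eLpNorm g 2 ν :=
  calc ‖∫ y, f y * g y ∂ν‖ₑ ≤ ∫⁻ y, ‖f y * g y‖ₑ ∂ν := enorm_integral_le_lintegral_enorm _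
    _ = eLpNorm (f • g) 1 ν := eLpNorm_one_eq_lintegral_enorm.symm
    _ ≤ eLpNorm f 2 ν * eLpNorm g 2 ν := eLpNorm_smul_le_mul_eLpNorm hg hf

lemma eLpNorm_two_sq_eq_lintegral (f : α → 𝕜) :
    eLpNorm f 2 μ ^ 2 = ∫⁻ x, ‖f x‖ₑ ^ 2 ∂μ := by
  simpa using eLpNorm_nnreal_pow_eq_lintegral (f := f) (μ := μ) (p := 2) two_ne_zero

lemma integral_mul_Lp_smul (k : β → 𝕜) (c : 𝕜) (u : Lp 𝕜 2 ν) :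
    ∫ y, k y * (c • u) y ∂ν = c • ∫ y, k y * u y ∂ν := by
  rw [← integral_smul]
  refine integral_congr_ae ?_
  filter_upwards [Lp.coeFn_smul c u] with y hy
  rw [hy, Pi.smul_apply, mul_smul_comm]

lemma integral_mul_Lp_add {k : β → 𝕜} (hk : MemLp k 2 ν) (u v : Lp 𝕜 2 ν) :
    ∫ y, k y * (u + v) y ∂ν = ∫ y, k y * u y ∂ν + ∫ y, k y * v y ∂ν := by
  have hint (w : Lp 𝕜 2 ν) : Integrable (fun y ↦ k y * w y) ν := hk.integrable_mul (Lp.memLp w)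
  rw [← integral_add (hint u) (hint v)]
  refine integral_congr_ae ?_
  filter_upwards [Lp.coeFn_add u v] with y hy
  rw [hy, Pi.add_apply, mul_add]

variable [SFinite ν]

lemma eLpNorm_two_prod_sq_eq_lintegral (hK : AEStronglyMeasurable K (μ.prod ν)) :
    eLpNorm K 2 (μ.prod ν) ^ 2 = ∫⁻ x, eLpNorm (fun y ↦ K (x, y)) 2 ν ^ 2 ∂μ := by
  simp only [eLpNorm_two_sq_eq_lintegral]
  exact lintegral_prod _ (hK.enorm.pow_const 2)

lemma aemeasurable_eLpNorm_two_prodMk_left_sq (hK : AEStronglyMeasurable K (μ.prod ν)) :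
    AEMeasurable (fun x ↦ eLpNorm (fun y ↦ K (x, y)) 2 ν ^ 2) μ := by
  simp only [eLpNorm_two_sq_eq_lintegral]
  exact (hK.enorm.pow_const 2).lintegral_prod_right'

lemma eLpNorm_integral_mul_le (hK : AEStronglyMeasurable K (μ.prod ν)) {u : β → 𝕜}
    (hu : AEStronglyMeasurable u ν) :
    eLpNorm (fun x ↦ ∫ y, K (x, y) * u y ∂ν) 2 μ ≤
      eLpNorm K 2 (μ.prod ν) * eLpNorm u 2 ν := by
  rw [← ENNReal.pow_le_pow_left_iff two_ne_zero, mul_pow, eLpNorm_two_prod_sq_eq_lintegral hK,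
    eLpNorm_two_sq_eq_lintegral]
  calc ∫⁻ x, ‖∫ y, K (x, y) * u y ∂ν‖ₑ ^ 2 ∂μ
      ≤ ∫⁻ x, eLpNorm (fun y ↦ K (x, y)) 2 ν ^ 2 * eLpNorm u 2 ν ^ 2 ∂μ := by
        refine lintegral_mono_ae ?_
        filter_upwards [hK.prodMk_left] with x hKx
        rw [← mul_pow]
        gcongr
        exact enorm_integral_mul_le_eLpNorm_mul_eLpNorm hKx hu
    _ = (∫⁻ x, eLpNorm (fun y ↦ K (x, y)) 2 ν ^ 2 ∂μ) * eLpNorm u 2 ν ^ 2 :=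
        lintegral_mul_const'' _ (aemeasurable_eLpNorm_two_prodMk_left_sq hK)

lemma ae_memLp_two_prodMk_left (hK : MemLp K 2 (μ.prod ν)) :
    ∀ᵐ x ∂μ, MemLp (fun y ↦ K (x, y)) 2 ν := by
  have hfin : ∫⁻ x, eLpNorm (fun y ↦ K (x, y)) 2 ν ^ 2 ∂μ ≠ ∞ := by
    rw [← eLpNorm_two_prod_sq_eq_lintegral hK.1]
    exact ENNReal.pow_ne_top hK.2.ne
  filter_upwards [hK.1.prodMk_left,
    ae_lt_top' (aemeasurable_eLpNorm_two_prodMk_left_sq hK.1) hfin] with x hmeas hlt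
  exact ⟨hmeas, (ENNReal.pow_lt_top_iff.1 hlt).resolve_right two_ne_zero⟩

lemma memLp_integral_mul (hK : MemLp K 2 (μ.prod ν)) (u : Lp 𝕜 2 ν) :
    MemLp (fun x ↦ ∫ y, K (x, y) * u y ∂ν) 2 μ :=
  ⟨(hK.1.mul (Lp.aestronglyMeasurable u).comp_snd).integral_prod_right',
    (eLpNorm_integral_mul_le hK.1 (Lp.aestronglyMeasurable u)).trans_lt
      (ENNReal.mul_lt_top hK.2 (Lp.memLp u).2)⟩

/-- The integral operator `u ↦ ∫ K(·, y) u(y) dν(y)` from `L²(ν)` to `L²(μ)` with a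
square-integrable kernel `K`, as a bounded operator. -/
def hilbertSchmidtOperator (hK : MemLp K 2 (μ.prod ν)) : Lp 𝕜 2 ν →L[𝕜] Lp 𝕜 2 μ :=
  LinearMap.mkContinuous
    { toFun u := (memLp_integral_mul hK u).toLp _
      map_add' u v := by
        rw [← MemLp.toLp_add]
        exact MemLp.toLp_congr _ _ <| (ae_memLp_two_prodMk_left hK).mono fun _ hKx ↦
          integral_mul_Lp_add hKx u v
      map_smul' c u := by
        rw [RingHom.id_apply, ← MemLp.toLp_const_smul]
        exact MemLp.toLp_congr _ _ (.of_forall fun _ ↦ integral_mul_Lp_smul _ c u) }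
    (eLpNorm K 2 (μ.prod ν)).toReal fun u ↦ by
      rw [LinearMap.coe_mk, AddHom.coe_mk, Lp.norm_toLp, Lp.norm_def, ← ENNReal.toReal_mul]
      exact ENNReal.toReal_mono (ENNReal.mul_ne_top hK.2.ne (Lp.memLp u).2.ne)
        (eLpNorm_integral_mul_le hK.1 (Lp.aestronglyMeasurable u))

lemma hilbertSchmidtOperator_apply_ae_eq (hK : MemLp K 2 (μ.prod ν)) (u : Lp 𝕜 2 ν) :
    hilbertSchmidtOperator hK u =ᵐ[μ] fun x ↦ ∫ y, K (x, y) * u y ∂ν :=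
  (memLp_integral_mul hK u).coeFn_toLp

end HilbertSchmidt

section WeylKernelPi

variable {n : ℕ}

lemma inner_toLp_toLp_eq_dotn (p q : Fin n → ℝ) :
    ⟪WithLp.toLp 2 p, WithLp.toLp 2 q⟫ = dotn p q := by
  simp [dotn, PiLp.inner_apply, mul_comm]

lemma integral_prodMap_toLp {E : Type*} [NormedAddCommGroup E] [NormedSpace ℝ E]
    (g : EuclideanSpace ℝ (Fin n) × EuclideanSpace ℝ (Fin n) → E) :
    ∫ z : (Fin n → ℝ) × (Fin n → ℝ), g (WithLp.toLp 2 z.1, WithLp.toLp 2 z.2) = ∫ z, g z :=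
  ((PiLp.volume_preserving_toLp (Fin n)).prod (PiLp.volume_preserving_toLp (Fin n))).integral_comp
    ((MeasurableEquiv.toLp 2 (Fin n → ℝ)).prodCongr
      (MeasurableEquiv.toLp 2 (Fin n → ℝ))).measurableEmbedding g

/-- The Weyl kernel of a symbol on `ℝⁿ × ℝⁿ`, where `ℝⁿ` is `Fin n → ℝ`; the sup norm there makes
the passage through `EuclideanSpace` necessary. -/
def weylKernelPi (a : 𝓢((Fin n → ℝ) × (Fin n → ℝ), ℂ)) : 𝓢((Fin n → ℝ) × (Fin n → ℝ), ℂ) :=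
  let e := (EuclideanSpace.equiv (Fin n) ℝ).prodCongr (EuclideanSpace.equiv (Fin n) ℝ)
  SchwartzMap.compCLMOfContinuousLinearEquiv ℂ e.symm
    (weylKernel (SchwartzMap.compCLMOfContinuousLinearEquiv ℂ e a))

lemma weylKernelPi_apply (a : 𝓢((Fin n → ℝ) × (Fin n → ℝ), ℂ)) (x y : Fin n → ℝ) :
    weylKernelPi a (x, y) = ((((2 * π) ^ n)⁻¹ : ℝ) : ℂ) *
      ∫ ξ, a ((2⁻¹ : ℝ) • (x + y), ξ) * Complex.exp (Complex.I * (dotn (x - y) ξ : ℝ)) := by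
  refine (weylKernel_apply _ (WithLp.toLp 2 x) (WithLp.toLp 2 y)).trans ?_
  rw [finrank_euclideanSpace_fin, ← Complex.coe_smul, smul_eq_mul,
    ← (PiLp.volume_preserving_toLp (Fin n)).integral_comp
      (MeasurableEquiv.toLp 2 (Fin n → ℝ)).measurableEmbedding]
  simp only [← WithLp.toLp_sub, inner_toLp_toLp_eq_dotn, smul_eq_mul, mul_comm (Complex.exp _)]
  rfl

lemma integral_norm_sq_weylKernelPi (a : 𝓢((Fin n → ℝ) × (Fin n → ℝ), ℂ)) :
    ∫ z, ‖weylKernelPi a z‖ ^ 2 = ((2 * π) ^ n)⁻¹ * ∫ z, ‖a z‖ ^ 2 := by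
  let b : 𝓢(EuclideanSpace ℝ (Fin n) × EuclideanSpace ℝ (Fin n), ℂ) :=
    SchwartzMap.compCLMOfContinuousLinearEquiv ℂ
      ((EuclideanSpace.equiv (Fin n) ℝ).prodCongr (EuclideanSpace.equiv (Fin n) ℝ)) a
  calc ∫ z, ‖weylKernelPi a z‖ ^ 2 = ∫ z, ‖weylKernel b z‖ ^ 2 :=
        integral_prodMap_toLp fun z ↦ ‖weylKernel b z‖ ^ 2
    _ = ((2 * π) ^ n)⁻¹ * ∫ z, ‖b z‖ ^ 2 := by
        rw [integral_norm_sq_weylKernel, finrank_euclideanSpace_fin]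
    _ = ((2 * π) ^ n)⁻¹ * ∫ z, ‖a z‖ ^ 2 := by
        rw [← integral_prodMap_toLp fun z ↦ ‖b z‖ ^ 2]
        rfl

end WeylKernelPi

/-- For a Schwartz symbol `a` on `ℝ^{2n}`, the Weyl kernel
`K_a(x,y) = (2π)^{−n} ∫ a((x+y)/2, ξ) e^{i(x−y|ξ)} dξ` is a Schwartz function on
`ℝ^{2n}`, the integral operator with kernel `K_a` is a bounded linear operator
on `L²(ℝⁿ)`, and it is Hilbert–Schmidt with
`∫ |K_a|² = (2π)^{−n} ∫ |a|²`. -/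
theorem weyl_kernel_bounded_hilbertSchmidt (n : ℕ) (hn : 1 ≤ n)
    (a : SchwartzMap ((Fin n → ℝ) × (Fin n → ℝ)) ℂ) :
    ∃ K : SchwartzMap ((Fin n → ℝ) × (Fin n → ℝ)) ℂ,
      (∀ x y : Fin n → ℝ,
        K (x, y) = ((((2 * Real.pi) ^ n)⁻¹ : ℝ) : ℂ) *
          ∫ ξ : Fin n → ℝ,
            a ((2⁻¹ : ℝ) • (x + y), ξ) *
              Complex.exp (Complex.I * ((dotn (x - y) ξ : ℝ) : ℂ))) ∧
      (∃ T : Lp ℂ 2 (volume : Measure (Fin n → ℝ)) →L[ℂ]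
              Lp ℂ 2 (volume : Measure (Fin n → ℝ)),
        ∀ u : Lp ℂ 2 (volume : Measure (Fin n → ℝ)),
          (T u : (Fin n → ℝ) → ℂ) =ᵐ[volume]
            fun x => ∫ y : Fin n → ℝ, K (x, y) * u y) ∧
      (∫ z : (Fin n → ℝ) × (Fin n → ℝ), ‖K z‖ ^ 2) =
        ((2 * Real.pi) ^ n)⁻¹ *
          ∫ z : (Fin n → ℝ) × (Fin n → ℝ), ‖a z‖ ^ 2 := by
  have : (volume : Measure ((Fin n → ℝ) × (Fin n → ℝ))).IsAddHaarMeasure :=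
    Measure.prod.instIsAddHaarMeasure volume volume
  have hK : MemLp (weylKernelPi a) 2 (volume.prod volume) := (weylKernelPi a).memLp 2 volume
  exact ⟨weylKernelPi a, weylKernelPi_apply a,
    ⟨hilbertSchmidtOperator hK, hilbertSchmidtOperator_apply_ae_eq hK⟩,
    integral_norm_sq_weylKernelPi a⟩
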